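/- Let $d \ge 2$, $m \ge 2$, $\lambda \ge 1$, and $A, B \ge \lambda^{-1/2}$. Let $\gamma : \mathbb{R}^{d-1} \to \mathbb{R}$ be a polynomial of degree at most $N$. Suppose $S \subset B(x_0, r)$ is a measurable set (with $r \le 1$) such that for all $u \in S$ one has $\mathfrak{D}^{m+1}\gamma(u) \ge A$ and $\mathfrak{D}^m\gamma(u) \le B$, where $\mathfrak{D}^m\gamma(u) = (\sum_{|\alpha|=m} |\partial^\alpha \gamma(u)|^2)^{1/2}$. Then $|S| \le C A^{-1} B$ for a constant $C$ depending only on $d$, $m$, $N$. -/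

import Mathlib

/-! The polynomial `γ` satisfies the bound because in one variable a polynomial `q` of degree at
most `N` has `|{|q| ≤ B, |q'| ≥ a}| ≤ 2 (N + 1) B / a`: the real line splits at the roots of `q'`
into at most `N + 1` pieces on which `q` is injective, and on each of them the change of variables
formula compares `∫ |q'|` with the length `2B` of the interval containing the values
(`volume_sublevel_one_var`).

Integrating over the lines in direction `j` that meet a fixed cube gives the same estimate for
`{|Q| ≤ B, |∂_j Q| ≥ a}` in several variables (`volume_sublevel_dir`). Where `𝔇^{m+1} γ ≥ A`, some
`∂^α γ` with `|α| = m + 1` has size at least a fixed multiple of `A`; writing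
`∂^α = ∂_j ∂^β` with `|β| = m`, the hypothesis `𝔇^m γ ≤ B` gives `|∂^β γ| ≤ B`. So `S` is covered
by finitely many sets of the previous type with `Q = ∂^β γ`. -/

open MeasureTheory Finset

/-- First-order partial derivative in direction `j`. -/
noncomputable def pd {n : ℕ} (j : Fin n) (f : EuclideanSpace ℝ (Fin n) → ℝ) :
    EuclideanSpace ℝ (Fin n) → ℝ :=
  fun x => fderiv ℝ f x (EuclideanSpace.single j 1)

/-- Multi-index partial derivative `∂^α f`. -/
noncomputable def mpd {n : ℕ} (α : Fin n → ℕ) (f : EuclideanSpace ℝ (Fin n) → ℝ) :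
    EuclideanSpace ℝ (Fin n) → ℝ :=
  (List.finRange n).foldr (fun j g => (pd j)^[α j] g) f

/-- `𝔇^m f (u) = (∑_{|α|=m} |∂^α f(u)|²)^{1/2}`. -/
noncomputable def Dm {n : ℕ} (m : ℕ) (f : EuclideanSpace ℝ (Fin n) → ℝ)
    (u : EuclideanSpace ℝ (Fin n)) : ℝ :=
  Real.sqrt (∑ α ∈ Finset.Nat.antidiagonalTuple n m, (mpd α f u) ^ 2)

/-! ### One variable -/

/-- Between consecutive roots of `q'` the polynomial `q` is injective, so on each of the at most
`N + 1` pieces the change of variables formula gives `a * |piece| ≤ |q(piece)| ≤ 2B`. -/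
lemma volume_sublevel_one_var (q : Polynomial ℝ) (N : ℕ) (hq : q.natDegree ≤ N) {a B : ℝ}
    (ha : 0 < a) :
    volume {t : ℝ | |q.eval t| ≤ B ∧ a ≤ |q.derivative.eval t|}
      ≤ ENNReal.ofReal ((N + 1) * (2 * B / a)) := by
  classical
  set E := {t : ℝ | |q.eval t| ≤ B ∧ a ≤ |q.derivative.eval t|} with hE
  have hEm : MeasurableSet E := by
    have h1 : MeasurableSet {t : ℝ | |q.eval t| ≤ B} :=
      measurableSet_le q.continuous.abs.measurable measurable_const
    have h2 : MeasurableSet {t : ℝ | a ≤ |q.derivative.eval t|} :=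
      measurableSet_le measurable_const q.derivative.continuous.abs.measurable
    exact h1.inter h2
  set R := q.derivative.roots.toFinset with hR
  -- `cnt` numbers the pieces; its monotonicity makes them measurable.
  set cnt : ℝ → ℕ := fun t => #{x ∈ R | x < t} with hcnt
  have hmono : Monotone cnt := fun s t hst => by
    refine card_le_card fun x hx => ?_
    simp only [mem_filter] at hx ⊢
    exact ⟨hx.1, hx.2.trans_le hst⟩
  have hcard : ∀ t, cnt t ≤ N := fun t => by
    refine (card_filter_le _ _).trans ((Multiset.toFinset_card_le _).trans ?_)
    exact (Polynomial.card_roots' _).trans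
      ((Polynomial.natDegree_derivative_le q).trans ((Nat.sub_le _ _).trans hq))
  have hcov : E ⊆ ⋃ k ∈ range (N + 1), (E ∩ cnt ⁻¹' {k}) := fun t ht => by
    simp only [Set.mem_iUnion]
    exact ⟨cnt t, mem_range.2 (Nat.lt_succ_of_le (hcard t)), ht, rfl⟩
  have hpiece : ∀ k, volume (E ∩ cnt ⁻¹' {k}) ≤ ENNReal.ofReal (2 * B / a) := fun k => by
    set F := E ∩ cnt ⁻¹' {k} with hF
    have hFm : MeasurableSet F := hEm.inter (hmono.measurable (measurableSet_singleton k))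
    have key : ∀ s ∈ F, ∀ t ∈ F, s < t → q.eval s ≠ q.eval t := by
      intro s hs t ht hst h
      obtain ⟨c, hc, hc0⟩ := exists_deriv_eq_zero hst q.continuous.continuousOn h
      rw [Polynomial.deriv] at hc0
      have hne : q.derivative ≠ 0 := fun h0 => by
        have := hs.1.2
        rw [h0] at this
        simp at this
        linarith
      have hcR : c ∈ R := by
        rw [hR, Multiset.mem_toFinset, Polynomial.mem_roots hne]
        exact hc0
      have hlt : cnt s < cnt t := by
        refine card_lt_card ⟨fun x hx => ?_, fun hsub => ?_⟩
        · simp only [mem_filter] at hx ⊢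
          exact ⟨hx.1, hx.2.trans hst⟩
        · have := hsub (mem_filter.2 ⟨hcR, hc.2⟩)
          exact absurd (mem_filter.1 this).2 (not_lt.2 hc.1.le)
      have h1 : cnt s = k := hs.2
      have h2 : cnt t = k := ht.2
      omega
    have hinj : Set.InjOn (fun t => q.eval t) F := by
      intro s hs t ht h
      rcases lt_trichotomy s t with hst | hst | hst
      · exact absurd h (key s hs t ht hst)
      · exact hst
      · exact absurd h.symm (key t ht s hs hst)
    have hcv := lintegral_image_eq_lintegral_abs_deriv_mul hFm
      (fun x _ => (q.hasDerivAt x).hasDerivWithinAt) hinj (fun _ => 1)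
    simp only [lintegral_const, one_mul, mul_one, Measure.restrict_apply MeasurableSet.univ,
      Set.univ_inter] at hcv
    have himg : volume ((fun t => q.eval t) '' F) ≤ ENNReal.ofReal (2 * B) := by
      have : (fun t => q.eval t) '' F ⊆ Set.Icc (-B) B := by
        rintro _ ⟨t, ht, rfl⟩
        exact abs_le.1 ht.1.1
      refine (measure_mono this).trans ?_
      rw [Real.volume_Icc]
      apply le_of_eq
      congr 1
      ring
    have hlow : ENNReal.ofReal a * volume F
        ≤ ∫⁻ x in F, ENNReal.ofReal |q.derivative.eval x| := by
      rw [← setLIntegral_const]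
      exact setLIntegral_mono' hFm fun x hx => ENNReal.ofReal_le_ofReal hx.1.2
    rw [← hcv] at hlow
    rw [ENNReal.ofReal_div_of_pos ha, ENNReal.le_div_iff_mul_le (by simp [ha]) (by simp), mul_comm]
    exact hlow.trans himg
  calc volume E ≤ ∑ k ∈ range (N + 1), volume (E ∩ cnt ⁻¹' {k}) :=
        (measure_mono hcov).trans (measure_biUnion_finset_le _ _)
    _ ≤ ∑ _k ∈ range (N + 1), ENNReal.ofReal (2 * B / a) := sum_le_sum fun k _ => hpiece k
    _ = ENNReal.ofReal ((N + 1) * (2 * B / a)) := by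
        rw [sum_const, card_range, nsmul_eq_mul, ENNReal.ofReal_mul (by positivity)]
        congr 1
        rw [← Nat.cast_succ, ENNReal.ofReal_natCast]

/-! ### Fubini -/

lemma totalDegree_pderiv_le {σ : Type*} (i : σ) (p : MvPolynomial σ ℝ) :
    (MvPolynomial.pderiv i p).totalDegree ≤ p.totalDegree := by
  refine Finset.sup_le fun s hs => ?_
  rw [MvPolynomial.mem_support_iff, MvPolynomial.coeff_pderiv] at hs
  have h := MvPolynomial.le_totalDegree (MvPolynomial.mem_support_iff.2 (left_ne_zero_of_mul hs))
  refine le_trans ?_ h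
  rw [Finsupp.sum_add_index' (fun _ => rfl) (fun _ _ _ => rfl)]
  exact Nat.le_add_right _ _

/-- Restricting to the line in direction `j` turns `∂_j` into the derivative. -/
lemma derivative_aeval_insertNth {k : ℕ} (j : Fin (k + 1)) (y : Fin k → ℝ)
    (Q : MvPolynomial (Fin (k + 1)) ℝ) :
    (MvPolynomial.aeval (j.insertNth Polynomial.X fun i => Polynomial.C (y i) :
        Fin (k + 1) → Polynomial ℝ) Q).derivative
      = MvPolynomial.aeval (j.insertNth Polynomial.X fun i => Polynomial.C (y i) :
        Fin (k + 1) → Polynomial ℝ) (MvPolynomial.pderiv j Q) := by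
  induction Q using MvPolynomial.induction_on with
  | C a => simp
  | add p q hp hq => simp [hp, hq]
  | mul_X p i hp =>
    rw [map_mul, Polynomial.derivative_mul, hp, MvPolynomial.pderiv_mul, map_add, map_mul, map_mul,
      MvPolynomial.aeval_X]
    congr 2
    refine Fin.succAboveCases j ?_ (fun i => ?_) i
    · simp
    · simp [MvPolynomial.pderiv_X_of_ne (Fin.succAbove_ne j i)]

lemma eval_aeval_insertNth {k : ℕ} (j : Fin (k + 1)) (y : Fin k → ℝ) (t : ℝ)
    (Q : MvPolynomial (Fin (k + 1)) ℝ) :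
    (MvPolynomial.aeval (j.insertNth Polynomial.X fun i => Polynomial.C (y i) :
        Fin (k + 1) → Polynomial ℝ) Q).eval t
      = MvPolynomial.eval (j.insertNth t y : Fin (k + 1) → ℝ) Q := by
  induction Q using MvPolynomial.induction_on with
  | C a => simp
  | add p q hp hq => simp [hp, hq]
  | mul_X p i hp =>
    rw [map_mul, Polynomial.eval_mul, hp, MvPolynomial.aeval_X, map_mul, MvPolynomial.eval_X]
    congr 1
    refine Fin.succAboveCases j ?_ (fun i => ?_) i <;> simp

/-- The one-variable estimate integrated over all lines in direction `j` meeting the cube of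
side `2` given by the sup-norm ball. -/
lemma volume_sublevel_dir {k : ℕ} (j : Fin (k + 1)) (Q : MvPolynomial (Fin (k + 1)) ℝ) (N : ℕ)
    (hQ : Q.totalDegree ≤ N) {a B : ℝ} (ha : 0 < a) (x0 : Fin (k + 1) → ℝ) :
    volume {u : Fin (k + 1) → ℝ | u ∈ Metric.closedBall x0 1 ∧ |MvPolynomial.eval u Q| ≤ B ∧
        a ≤ |MvPolynomial.eval u (MvPolynomial.pderiv j Q)|}
      ≤ ENNReal.ofReal (2 ^ k * ((N + 1) * (2 * B / a))) := by
  set T := {u : Fin (k + 1) → ℝ | u ∈ Metric.closedBall x0 1 ∧ |MvPolynomial.eval u Q| ≤ B ∧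
        a ≤ |MvPolynomial.eval u (MvPolynomial.pderiv j Q)|} with hT
  have hTm : MeasurableSet T := by
    have h1 : MeasurableSet {u : Fin (k + 1) → ℝ | |MvPolynomial.eval u Q| ≤ B} :=
      measurableSet_le (MvPolynomial.continuous_eval Q).abs.measurable measurable_const
    have h2 : MeasurableSet {u : Fin (k + 1) → ℝ |
        a ≤ |MvPolynomial.eval u (MvPolynomial.pderiv j Q)|} :=
      measurableSet_le measurable_const (MvPolynomial.continuous_eval _).abs.measurable
    have h3 : MeasurableSet (Metric.closedBall x0 1) := measurableSet_closedBall
    exact h3.inter (h1.inter h2)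
  have hmp := (volume_preserving_piFinSuccAbove (fun _ : Fin (k + 1) => ℝ) j).symm
  rw [← hmp.measure_preimage hTm.nullMeasurableSet, Measure.volume_eq_prod,
    Measure.prod_apply_symm (hmp.measurable hTm)]
  set W := Metric.closedBall (fun i => x0 (j.succAbove i)) (1 : ℝ) with hW
  have hslice : ∀ y : Fin k → ℝ,
      volume ((fun t : ℝ => (t, y)) ⁻¹'
        ((MeasurableEquiv.piFinSuccAbove (fun _ : Fin (k + 1) => ℝ) j).symm ⁻¹' T))
      ≤ W.indicator (fun _ => ENNReal.ofReal ((N + 1) * (2 * B / a))) y := by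
    intro y
    by_cases hy : y ∈ W
    · rw [Set.indicator_of_mem hy]
      refine (measure_mono ?_).trans (volume_sublevel_one_var (MvPolynomial.aeval
        (j.insertNth Polynomial.X fun i => Polynomial.C (y i) :
        Fin (k + 1) → Polynomial ℝ) Q) N ?_ (B := B) ha)
      · intro t ht
        have ht' : (j.insertNth t y : Fin (k + 1) → ℝ) ∈ T := ht
        rw [Set.mem_ofPred_eq, derivative_aeval_insertNth, eval_aeval_insertNth,
          eval_aeval_insertNth]
        exact ht'.2
      · refine (MvPolynomial.aeval_natDegree_le Q hQ _ (n := 1) fun i => ?_).trans (mul_one N).le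
        refine Fin.succAboveCases j ?_ (fun i => ?_) i <;> simp
    · rw [Set.indicator_of_notMem hy, nonpos_iff_eq_zero]
      convert measure_empty (μ := (volume : Measure ℝ))
      refine Set.eq_empty_of_forall_notMem fun t ht => hy ?_
      have ht' : (j.insertNth t y : Fin (k + 1) → ℝ) ∈ T := ht
      have h1 := ht'.1
      rw [Metric.mem_closedBall, dist_pi_le_iff zero_le_one] at h1
      rw [hW, Metric.mem_closedBall, dist_pi_le_iff zero_le_one]
      intro i
      simpa using h1 (j.succAbove i)
  refine (lintegral_mono hslice).trans ?_
  rw [lintegral_indicator_const measurableSet_closedBall, Real.volume_pi_closedBall _ zero_le_one,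
    mul_comm, Fintype.card_fin, mul_one,
    ENNReal.ofReal_mul (p := 2 ^ k) (by positivity)]

/-! ### Formal and analytic derivatives -/

/-- `∂^α` acting formally on polynomials; `l` lists the coordinates to differentiate in. -/
noncomputable def formalMpd {n : ℕ} (l : List (Fin n)) (α : Fin n → ℕ)
    (P : MvPolynomial (Fin n) ℝ) : MvPolynomial (Fin n) ℝ :=
  l.foldr (fun j g => (MvPolynomial.pderiv j)^[α j] g) P

lemma differentiableAt_eval_and_pd {n : ℕ} (P : MvPolynomial (Fin n) ℝ) (u : EuclideanSpace ℝ (Fin n)) :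
    DifferentiableAt ℝ (fun v : EuclideanSpace ℝ (Fin n) => MvPolynomial.eval (fun i => v i) P) u ∧
    ∀ j, pd j (fun v => MvPolynomial.eval (fun i => v i) P) u
      = MvPolynomial.eval (fun i => u i) (MvPolynomial.pderiv j P) := by
  unfold pd
  induction P using MvPolynomial.induction_on with
  | C a => simp
  | add p q hp hq =>
    simp only [map_add]
    refine ⟨hp.1.add hq.1, fun j => ?_⟩
    rw [fderiv_fun_add hp.1 hq.1, add_apply, hp.2, hq.2]
  | mul_X p i hp =>
    simp only [map_mul, MvPolynomial.eval_X]
    have hc : HasFDerivAt (fun v : EuclideanSpace ℝ (Fin n) => v i)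
        (EuclideanSpace.proj i : EuclideanSpace ℝ (Fin n) →L[ℝ] ℝ) u :=
      (EuclideanSpace.proj i : EuclideanSpace ℝ (Fin n) →L[ℝ] ℝ).hasFDerivAt
    refine ⟨hp.1.mul hc.differentiableAt, fun j => ?_⟩
    rw [fderiv_fun_mul hp.1 hc.differentiableAt, hc.fderiv, MvPolynomial.pderiv_mul]
    simp only [add_apply, smul_apply, hp.2, map_add,
      map_mul, MvPolynomial.eval_X, smul_eq_mul]
    rcases eq_or_ne i j with rfl | hij
    · simp; ring
    · simp [hij, MvPolynomial.pderiv_X_of_ne hij]; ring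

lemma mpd_eval {n : ℕ} (α : Fin n → ℕ) (P : MvPolynomial (Fin n) ℝ) :
    mpd α (fun v => MvPolynomial.eval (fun i => v i) P)
      = fun v => MvPolynomial.eval (fun i => v i) (formalMpd (List.finRange n) α P) := by
  have hstep : ∀ (j : Fin n) (c : ℕ) (Q : MvPolynomial (Fin n) ℝ),
      (pd j)^[c] (fun v => MvPolynomial.eval (fun i => v i) Q)
        = fun v => MvPolynomial.eval (fun i => v i) ((MvPolynomial.pderiv j)^[c] Q) := by
    intro j c
    induction c with
    | zero => intro Q; rfl
    | succ c ih =>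
      intro Q
      rw [Function.iterate_succ_apply, Function.iterate_succ_apply, ← ih]
      congr 1
      funext u
      exact (differentiableAt_eval_and_pd Q u).2 j
  unfold mpd formalMpd
  induction List.finRange n with
  | nil => rfl
  | cons i l ih => rw [List.foldr_cons, List.foldr_cons, ih, hstep]

lemma totalDegree_formalMpd_le {n : ℕ} (l : List (Fin n)) (α : Fin n → ℕ)
    (P : MvPolynomial (Fin n) ℝ) : (formalMpd l α P).totalDegree ≤ P.totalDegree := by
  have hstep : ∀ (j : Fin n) (c : ℕ) (Q : MvPolynomial (Fin n) ℝ),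
      ((MvPolynomial.pderiv j)^[c] Q).totalDegree ≤ Q.totalDegree := by
    intro j c
    induction c with
    | zero => intro Q; rfl
    | succ c ih => exact fun Q => (ih _).trans (totalDegree_pderiv_le j Q)
  induction l with
  | nil => rfl
  | cons i l ih => exact (hstep i _ _).trans ih

lemma formalMpd_congr {n : ℕ} {l : List (Fin n)} {α β : Fin n → ℕ} (h : ∀ i ∈ l, α i = β i)
    (P : MvPolynomial (Fin n) ℝ) : formalMpd l α P = formalMpd l β P := by
  induction l with
  | nil => rfl
  | cons i l ih =>
    change (MvPolynomial.pderiv i)^[α i] (formalMpd l α P)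
      = (MvPolynomial.pderiv i)^[β i] (formalMpd l β P)
    rw [ih fun i hi => h i (List.mem_cons_of_mem _ hi), h i List.mem_cons_self]

/-- Splitting off the outermost derivative: choosing `j` to be the first coordinate with `α j ≠ 0`
avoids commuting partial derivatives. -/
lemma exists_formalMpd_eq_pderiv {n : ℕ} (l : List (Fin n)) (hl : l.Nodup) (α : Fin n → ℕ)
    (h : ∃ i ∈ l, α i ≠ 0) :
    ∃ j, α j ≠ 0 ∧ j ∈ l ∧ ∀ P, formalMpd l α P
      = MvPolynomial.pderiv j (formalMpd l (Function.update α j (α j - 1)) P) := by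
  induction l with
  | nil => simp at h
  | cons i l ih =>
    rw [List.nodup_cons] at hl
    by_cases hi : α i = 0
    · obtain ⟨j, hj, hjl, hP⟩ := ih hl.2 (by simpa [hi] using h)
      refine ⟨j, hj, List.mem_cons_of_mem _ hjl, fun P => ?_⟩
      have hij : i ≠ j := fun h => hl.1 (h ▸ hjl)
      change (MvPolynomial.pderiv i)^[α i] (formalMpd l α P) = MvPolynomial.pderiv j
        ((MvPolynomial.pderiv i)^[Function.update α j (α j - 1) i] (formalMpd l _ P))
      rw [Function.update_of_ne hij, hi]
      exact hP P
    · refine ⟨i, hi, List.mem_cons_self, fun P => ?_⟩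
      change (MvPolynomial.pderiv i)^[α i] (formalMpd l α P) = MvPolynomial.pderiv i
        ((MvPolynomial.pderiv i)^[Function.update α i (α i - 1) i] (formalMpd l _ P))
      rw [Function.update_self, ← Function.iterate_succ_apply' (MvPolynomial.pderiv i),
        Nat.succ_eq_add_one, Nat.sub_add_cancel (Nat.one_le_iff_ne_zero.2 hi)]
      congr 1
      refine formalMpd_congr (fun s hs => ?_) P
      rw [Function.update_of_ne]
      rintro rfl
      exact hl.1 hs

/-! ### The estimate -/

lemma abs_mpd_le_Dm {n m : ℕ} (f : EuclideanSpace ℝ (Fin n) → ℝ) (u : EuclideanSpace ℝ (Fin n))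
    {α : Fin n → ℕ} (hα : ∑ i, α i = m) : |mpd α f u| ≤ Dm m f u := by
  refine Real.abs_le_sqrt ?_
  exact single_le_sum (f := fun α => (mpd α f u) ^ 2) (fun _ _ => sq_nonneg _)
    (Finset.Nat.mem_antidiagonalTuple.2 hα)

/-- Pigeonhole: some partial derivative carries a fixed proportion of `𝔇^m f`. -/
lemma exists_le_abs_mpd {n m : ℕ} (f : EuclideanSpace ℝ (Fin n) → ℝ)
    (u : EuclideanSpace ℝ (Fin n)) {A : ℝ} (hA : 0 < A) (h : A ≤ Dm m f u) :
    ∃ α ∈ Finset.Nat.antidiagonalTuple n m,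
      A / (#(Finset.Nat.antidiagonalTuple n m) + 1) ≤ |mpd α f u| := by
  by_contra! hcon
  set K := #(Finset.Nat.antidiagonalTuple n m) with hK
  set a := A / ((K : ℝ) + 1) with ha
  have ha0 : 0 < a := by positivity
  have hsum : ∑ α ∈ Finset.Nat.antidiagonalTuple n m, (mpd α f u) ^ 2 ≤ K * a ^ 2 := by
    rw [hK, ← nsmul_eq_mul]
    refine sum_le_card_nsmul _ _ _ fun α hα => ?_
    exact sq_le_sq' (by linarith [(abs_lt.1 (hcon α hα)).1]) (abs_lt.1 (hcon α hα)).2.le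
  have h1 : A ^ 2 ≤ K * a ^ 2 := ((Real.le_sqrt' hA).1 h).trans hsum
  have h2 : A = (K + 1) * a := by rw [ha]; field_simp
  have hK0 : (0 : ℝ) ≤ K := Nat.cast_nonneg K
  rw [h2] at h1
  nlinarith [sq_pos_of_pos ha0, mul_nonneg hK0 (sq_nonneg a),
    mul_nonneg hK0 (mul_nonneg hK0 (sq_nonneg a))]

lemma sublevel_estimate (k m N : ℕ) {A B : ℝ} (hA : 0 < A)
    (P : MvPolynomial (Fin (k + 1)) ℝ) (γ : EuclideanSpace ℝ (Fin (k + 1)) → ℝ)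
    (x0 : EuclideanSpace ℝ (Fin (k + 1))) (r : ℝ) (S : Set (EuclideanSpace ℝ (Fin (k + 1))))
    (hP : P.totalDegree ≤ N) (hγ : ∀ u, γ u = MvPolynomial.eval (fun i => u i) P)
    (hr : r ≤ 1) (hS : S ⊆ Metric.ball x0 r)
    (h1 : ∀ u ∈ S, A ≤ Dm (m + 1) γ u) (h2 : ∀ u ∈ S, Dm m γ u ≤ B) :
    volume S ≤ ENNReal.ofReal (#(Finset.Nat.antidiagonalTuple (k + 1) (m + 1)) * (2 ^ k *
      ((N + 1) * (2 * B /
        (A / (#(Finset.Nat.antidiagonalTuple (k + 1) (m + 1)) + 1)))))) := by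
  set I := Finset.Nat.antidiagonalTuple (k + 1) (m + 1) with hI
  set a := A / ((#I : ℝ) + 1) with ha
  have ha0 : 0 < a := by positivity
  obtain rfl : γ = fun u => MvPolynomial.eval (fun i => u i) P := funext hγ
  have hcov : S ⊆ ⋃ α ∈ I, {u ∈ S | a ≤ |mpd α (fun u => MvPolynomial.eval (fun i => u i) P) u|} :=
    fun u hu => by
      obtain ⟨α, hα, h⟩ := exists_le_abs_mpd _ u hA (h1 u hu)
      simp only [Set.mem_iUnion]
      exact ⟨α, hα, hu, h⟩
  have hpiece : ∀ α ∈ I,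
      volume {u ∈ S | a ≤ |mpd α (fun u => MvPolynomial.eval (fun i => u i) P) u|}
        ≤ ENNReal.ofReal (2 ^ k * ((N + 1) * (2 * B / a))) := by
    intro α hα
    have hsum : ∑ i, α i = m + 1 := Finset.Nat.mem_antidiagonalTuple.1 hα
    have hex : ∃ i ∈ List.finRange (k + 1), α i ≠ 0 := by
      by_contra! hcon
      have : ∑ i, α i = 0 := sum_eq_zero fun i _ => hcon i (List.mem_finRange i)
      omega
    obtain ⟨j, hj, -, hjP⟩ := exists_formalMpd_eq_pderiv _ (List.nodup_finRange _) α hex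
    set β := Function.update α j (α j - 1) with hβ
    have hβsum : ∑ i, β i = m := by
      rw [hβ, sum_update_of_mem (mem_univ j)]
      rw [← add_sum_erase _ _ (mem_univ j), Finset.erase_eq] at hsum
      omega
    have hbase := volume_sublevel_dir j (formalMpd (List.finRange (k + 1)) β P) N
      ((totalDegree_formalMpd_le _ _ _).trans hP) (B := B) ha0 (fun i => x0 i)
    rw [← hjP] at hbase
    refine le_trans ?_ hbase
    refine (measure_mono ?_).trans
      ((PiLp.volume_preserving_ofLp (Fin (k + 1))).measure_preimage_le _)
    rintro u ⟨huS, hu⟩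
    refine ⟨?_, ?_, ?_⟩
    · rw [Metric.mem_closedBall, dist_pi_le_iff zero_le_one]
      intro i
      have h3 : dist u x0 ≤ 1 := (Metric.mem_ball.1 (hS huS)).le.trans hr
      refine le_trans ?_ h3
      rw [dist_eq_norm, dist_eq_norm]
      exact PiLp.norm_apply_le (u - x0) i
    · have := (abs_mpd_le_Dm (fun u => MvPolynomial.eval (fun i => u i) P) u hβsum).trans (h2 u huS)
      rwa [mpd_eval] at this
    · rwa [mpd_eval] at hu
  calc volume S
      ≤ ∑ α ∈ I, volume {u ∈ S | a ≤ |mpd α (fun u => MvPolynomial.eval (fun i => u i) P) u|} :=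
        (measure_mono hcov).trans (measure_biUnion_finset_le _ _)
    _ ≤ ∑ _α ∈ I, ENNReal.ofReal (2 ^ k * ((N + 1) * (2 * B / a))) := sum_le_sum hpiece
    _ = _ := by
        rw [sum_const, nsmul_eq_mul, ENNReal.ofReal_mul (p := (#I : ℝ)) (by positivity),
          ENNReal.ofReal_natCast]

/-- sublevel set estimate for polynomials away from degeneracy. -/
theorem stmt0 (d m N : ℕ) (hd : 2 ≤ d) (hm : 2 ≤ m) :
    ∃ C : ℝ, 0 < C ∧
      ∀ (lam A B : ℝ) (P : MvPolynomial (Fin (d - 1)) ℝ)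
        (γ : EuclideanSpace ℝ (Fin (d - 1)) → ℝ)
        (x0 : EuclideanSpace ℝ (Fin (d - 1))) (r : ℝ)
        (S : Set (EuclideanSpace ℝ (Fin (d - 1)))),
        1 ≤ lam → lam ^ (-(1 : ℝ) / 2) ≤ A → lam ^ (-(1 : ℝ) / 2) ≤ B →
        P.totalDegree ≤ N → (∀ u, γ u = MvPolynomial.eval (fun i => u i) P) →
        r ≤ 1 → MeasurableSet S → S ⊆ Metric.ball x0 r →
        (∀ u ∈ S, A ≤ Dm (m + 1) γ u) → (∀ u ∈ S, Dm m γ u ≤ B) →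
        volume S ≤ ENNReal.ofReal (C * A⁻¹ * B) := by
  obtain ⟨k, rfl⟩ : ∃ k, d = k + 2 := ⟨d - 2, by omega⟩
  set K : ℝ := ((#(Finset.Nat.antidiagonalTuple (k + 1) (m + 1)) : ℕ) : ℝ) with hK
  have hK0 : 0 ≤ K := Nat.cast_nonneg _
  refine ⟨(K + 1) * (2 ^ k * ((N + 1) * (2 * (K + 1)))), by positivity, ?_⟩
  intro lam A B P γ x0 r S hlam hA hB hP hγ hr _ hS h1 h2
  have hlam0 : 0 < lam ^ (-(1 : ℝ) / 2) := Real.rpow_pos_of_pos (by linarith) _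
  have hA0 : 0 < A := hlam0.trans_le hA
  have hB0 : 0 < B := hlam0.trans_le hB
  refine (sublevel_estimate k m N hA0 P γ x0 r S hP hγ hr hS h1 h2).trans
    (ENNReal.ofReal_le_ofReal ?_)
  have : (K + 1) * (2 ^ k * ((N + 1) * (2 * (K + 1)))) * A⁻¹ * B
      = (K + 1) * (2 ^ k * ((N + 1) * (2 * B / (A / (K + 1))))) := by
    field_simp
  rw [this]
  gcongr
  linarith
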